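/- Let (Δ, M) be a uniform boundary pair with M connected and not homeomorphic to the circle S¹, and assume the action of Δ on M is minimal (every orbit is dense; this is automatic for uniform boundary pairs). Then there exists a point z ∈ M such that the set X(z) = {w ∈ M : w ≠ z and M ∖ {z, w} is connected} is dense in M. -/

import Mathlib

open Filter Topology Matrix

noncomputable instance projectivizationTopology
    {K V : Type*} [DivisionRing K] [AddCommGroup V] [Module K V] [TopologicalSpace V] :
    TopologicalSpace (Projectivization K V) :=
  inferInstanceAs (TopologicalSpace (Quotient _))

/-- `g n • z → a` locally uniformly on `M ∖ {b}`. -/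
def ConvLocUnif {Γ M : Type} [SMul Γ M] [TopologicalSpace M]
    (g : ℕ → Γ) (a b : M) : Prop :=
  ∀ K : Set M, IsCompact K → b ∉ K →
    ∀ U ∈ 𝓝 a, ∀ᶠ n in atTop, ∀ z ∈ K, g n • z ∈ U

/-- The action of `Γ` on `M` is an action by homeomorphisms with the convergence property. -/
def IsConvergenceAction (Γ M : Type) [Group Γ] [TopologicalSpace M] [MulAction Γ M] : Prop :=
  (∀ γ : Γ, Continuous fun x : M => γ • x) ∧
  ∀ g : ℕ → Γ, Function.Injective g →
    ∃ φ : ℕ → ℕ, StrictMono φ ∧ ∃ a b : M, ConvLocUnif (fun n => g (φ n)) a b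

def IsConicalLimitPoint (Γ : Type) {M : Type} [Group Γ] [TopologicalSpace M]
    [MulAction Γ M] (x : M) : Prop :=
  ∃ a b : M, a ≠ b ∧ ∃ g : ℕ → Γ,
    Tendsto (fun n => g n • x) atTop (𝓝 a) ∧
    ∀ y : M, y ≠ x → Tendsto (fun n => g n • y) atTop (𝓝 b)

def IsBoundedParabolicPoint (Γ : Type) {M : Type} [Group Γ] [TopologicalSpace M]
    [MulAction Γ M] (x : M) : Prop :=
  Infinite (MulAction.stabilizer Γ x) ∧
  (∀ y : M, (∀ γ ∈ MulAction.stabilizer Γ x, γ • y = y) → y = x) ∧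
  (∃ K : Set M, IsCompact K ∧ x ∉ K ∧
    ∀ y : M, y ≠ x → ∃ γ ∈ MulAction.stabilizer Γ x, γ • y ∈ K)

/-- `(Γ, M)` is a boundary pair: `Γ` is a finitely generated group acting as a geometrically
finite convergence group on the perfect compact metrizable space `M`. -/
structure IsBoundaryPair (Γ M : Type) [Group Γ] [TopologicalSpace M] [MulAction Γ M] : Prop where
  fg : Group.FG Γ
  compact : CompactSpace M
  metrizable : TopologicalSpace.MetrizableSpace M
  perfect : ∀ x : M, Filter.NeBot (𝓝[≠] x)
  conv : IsConvergenceAction Γ M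
  gf : ∀ x : M, IsConicalLimitPoint Γ x ∨
    (IsBoundedParabolicPoint Γ x ∧ Group.FG (MulAction.stabilizer Γ x))

/-- The unit circle `S¹`. -/
abbrev Circle1 : Type := Metric.sphere (0 : EuclideanSpace ℝ (Fin 2)) 1

/-!
An infinite minimal convergence group moves every proper closed subset of `M` into any given
nonempty open set, and this is all the dynamics that the argument needs. Let `z` be a non-cut
point of `M`, which exists because `M` is a continuum.

If `M` has a cut point `c`, with `M ∖ {c} = A ⊔ B`, translate the picture so that `B ∪ {c}` lies
inside a given open set and misses `z`. The translated cut point separates `z` from the translates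
of `z` in `B`, and two non-cut points which are separated by a cut point never form a cut pair.

If `M` has no cut point and `X(z)` misses an open set `U`, then translating shows that every
nonempty open set `V` contains a point forming a cut pair with each point outside `V`. For
distinct `x` and `y` this gives two crossing cut pairs `{a, x}` and `{b, y}`, and one of the four
pieces which they cut out of `M` is a side of `{x, y}`. Hence any two points form a cut pair, and
then `M` is a circle: each side of a cut pair, together with the pair, is linearly ordered by its
cut points, hence an arc.
-/

open Pointwise TopologicalSpace unitInterval

section OpenPartition

variable {X : Type*} [TopologicalSpace X]

/-- `P` and `Q` are disjoint open sets with union `S`. Either side may be empty: a separation of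
`S` is an open partition with both sides nonempty. -/
structure IsOpenPartition (S P Q : Set X) : Prop where
  isOpen_left : IsOpen P
  isOpen_right : IsOpen Q
  disjoint : Disjoint P Q
  union_eq : P ∪ Q = S

theorem exists_isOpenPartition {S : Set X} (hS : IsOpen S) (h : ¬ IsPreconnected S) :
    ∃ P Q, IsOpenPartition S P Q ∧ P.Nonempty ∧ Q.Nonempty := by
  simp only [IsPreconnected, not_forall, Set.not_nonempty_iff_eq_empty] at h
  obtain ⟨u, v, hu, hv, hSuv, hSu, hSv, hdisj⟩ := h
  refine ⟨S ∩ u, S ∩ v, ⟨hS.inter hu, hS.inter hv, ?_, ?_⟩, hSu, hSv⟩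
  · rwa [Set.disjoint_iff_inter_eq_empty, ← Set.inter_inter_distrib_left]
  · rw [← Set.inter_union_distrib_left, Set.inter_eq_left.2 hSuv]

namespace IsOpenPartition

variable {S P Q : Set X} {x y z w : X}

theorem symm (h : IsOpenPartition S P Q) : IsOpenPartition S Q P :=
  ⟨h.isOpen_right, h.isOpen_left, h.disjoint.symm, by rw [Set.union_comm, h.union_eq]⟩

theorem subset_left (h : IsOpenPartition S P Q) : P ⊆ S :=
  h.union_eq ▸ Set.subset_union_left

theorem subset_right (h : IsOpenPartition S P Q) : Q ⊆ S :=
  h.symm.subset_left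

theorem mem_or_mem (h : IsOpenPartition S P Q) (hx : x ∈ S) : x ∈ P ∨ x ∈ Q := by
  rwa [← Set.mem_union, h.union_eq]

theorem notMem_right (h : IsOpenPartition S P Q) (hx : x ∈ P) : x ∉ Q :=
  Set.disjoint_left.1 h.disjoint hx

theorem notMem_left (h : IsOpenPartition S P Q) (hx : x ∈ Q) : x ∉ P :=
  h.symm.notMem_right hx

theorem not_isPreconnected (h : IsOpenPartition S P Q) (hP : P.Nonempty) (hQ : Q.Nonempty) :
    ¬ IsPreconnected S := fun hS ↦ by
  obtain ⟨p, hp⟩ := hP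
  obtain ⟨q, hq⟩ := hQ
  exact h.notMem_left hq (hS.subset_left_of_subset_union h.isOpen_left h.isOpen_right h.disjoint
    h.union_eq.ge ⟨p, h.subset_left hp, hp⟩ (h.subset_right hq))

theorem subset_left_of_mem {T : Set X} (h : IsOpenPartition S P Q) (hT : IsPreconnected T)
    (hTS : T ⊆ S) (hxT : x ∈ T) (hxP : x ∈ P) : T ⊆ P :=
  hT.subset_left_of_subset_union h.isOpen_left h.isOpen_right h.disjoint
    (hTS.trans h.union_eq.ge) ⟨x, hxT, hxP⟩

theorem preimage {Y : Type*} [TopologicalSpace Y] (h : IsOpenPartition S P Q) {f : Y → X}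
    (hf : Continuous f) : IsOpenPartition (f ⁻¹' S) (f ⁻¹' P) (f ⁻¹' Q) :=
  ⟨h.isOpen_left.preimage hf, h.isOpen_right.preimage hf, h.disjoint.preimage f,
    by rw [← Set.preimage_union, h.union_eq]⟩

theorem smul {G : Type*} [Group G] [MulAction G X] [ContinuousConstSMul G X]
    (h : IsOpenPartition S P Q) (g : G) : IsOpenPartition (g • S) (g • P) (g • Q) :=
  ⟨h.isOpen_left.smul g, h.isOpen_right.smul g, Set.disjoint_smul_set.2 h.disjoint,
    by rw [← Set.smul_set_union, h.union_eq]⟩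

theorem insert_left_eq_compl (h : IsOpenPartition {x}ᶜ P Q) : insert x P = Qᶜ := by
  have hdisj : Disjoint (insert x P) Q :=
    Set.disjoint_insert_left.2 ⟨fun hx ↦ h.subset_right hx rfl, h.disjoint⟩
  refine hdisj.subset_compl_right.antisymm fun p hp ↦ or_iff_not_imp_left.2 fun hpx ↦ ?_
  exact (h.mem_or_mem hpx).resolve_right hp

-- The retraction of `S` onto `insert w P` that collapses `Q` to `w` is continuous on `S`.
theorem isPreconnected_insert_left (h : IsOpenPartition (S \ {w}) P Q) (hS : IsPreconnected S)
    (hw : w ∈ S) : IsPreconnected (insert w P) := by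
  classical
  have hdisj := Set.disjoint_left.1 h.disjoint
  have hunion (p : X) : p ∈ P ∨ p ∈ Q ↔ p ∈ S ∧ p ≠ w := Set.ext_iff.1 h.union_eq p
  let r : X → X := fun p ↦ if p ∈ P then p else w
  have hr : ContinuousOn r S := by
    refine continuousOn_iff'.2 fun N hN ↦ ?_
    by_cases hwN : w ∈ N
    · exact ⟨N ∪ Q, hN.union h.isOpen_right, by ext; grind⟩
    · exact ⟨P ∩ N, h.isOpen_left.inter hN, by ext; grind⟩
  have hrS : r '' S = insert w P := by
    ext p
    simp only [Set.mem_image]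
    grind
  exact hrS ▸ hS.image r hr

theorem isPreconnected_insert_left_of_compl_singleton [PreconnectedSpace X]
    (h : IsOpenPartition {x}ᶜ P Q) : IsPreconnected (insert x P) :=
  isPreconnected_insert_left (S := Set.univ) (by rwa [← Set.compl_eq_univ_sdiff])
    isPreconnected_univ trivial

theorem insert_left_subset [PreconnectedSpace X] {P' Q' : Set X} (h : IsOpenPartition {x}ᶜ P Q)
    (h' : IsOpenPartition {y}ᶜ P' Q') (hy : y ∈ Q) (hzQ : z ∉ Q) (hzQ' : z ∉ Q') :
    insert x P ⊆ P' := by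
  have hzy : z ≠ y := fun hzy ↦ hzQ (hzy ▸ hy)
  have hyP : y ∉ insert x P := h.insert_left_eq_compl ▸ not_not.2 hy
  exact h'.subset_left_of_mem h.isPreconnected_insert_left_of_compl_singleton
    (Set.subset_compl_singleton_iff.2 hyP) (h.insert_left_eq_compl ▸ hzQ)
    ((h'.mem_or_mem hzy).resolve_right hzQ')

theorem isPreconnected_insert_left_of_compl_pair (h : IsOpenPartition {z, w}ᶜ P Q) (hzw : z ≠ w)
    (hz : IsPreconnected ({z}ᶜ : Set X)) : IsPreconnected (insert w P) := by
  refine isPreconnected_insert_left (S := {z}ᶜ) (Q := Q) ?_ hz hzw.symm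
  rwa [Set.sdiff_eq, ← Set.compl_union]

theorem isPreconnected_insert_insert_left (h : IsOpenPartition {z, w}ᶜ P Q) (hzw : z ≠ w)
    (hz : IsPreconnected ({z}ᶜ : Set X)) (hw : IsPreconnected ({w}ᶜ : Set X))
    (hP : P.Nonempty) : IsPreconnected (insert z (insert w P)) := by
  obtain ⟨p, hp⟩ := hP
  have hzP : IsPreconnected (insert z P) :=
    isPreconnected_insert_left_of_compl_pair (by rwa [Set.pair_comm]) hzw.symm hw
  have hwP := h.isPreconnected_insert_left_of_compl_pair hzw hz
  have hunion : insert z (insert w P) = insert z P ∪ insert w P := by grind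
  exact hunion ▸ hzP.union p (Or.inr hp) (Or.inr hp) hwP

-- Otherwise `B ∪ {b, y}` joins `b` to `y` outside `{a, x}`.
theorem mem_right_of_crossing (hX : ∀ x : X, IsPreconnected ({x}ᶜ : Set X)) {a b : X}
    {A B : Set X} (h : IsOpenPartition {a, x}ᶜ P Q) (h' : IsOpenPartition {b, y}ᶜ A B)
    (hB : B.Nonempty) (hy : y ∈ P) (hb : b ∈ Q) (ha : a ∈ A) : x ∈ B := by
  have hby : b ≠ y := fun hby ↦ h.notMem_right hy (hby ▸ hb)
  have hbS := h.subset_right hb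
  have hyS := h.subset_left hy
  by_contra hxB
  have hsub : insert b (insert y B) ⊆ {a, x}ᶜ := by
    have := h'.notMem_right ha
    grind
  exact h.notMem_left hb (h.subset_left_of_mem
    (h'.symm.isPreconnected_insert_insert_left hby (hX b) (hX y) hB) hsub
    (Or.inr (Or.inl rfl)) hy (Or.inl rfl))

end IsOpenPartition

theorem exists_isOpenPartition_mem_left {S : Set X} {x : X} (hS : IsOpen S) (h : ¬ IsPreconnected S)
    (hx : x ∈ S) : ∃ P Q, IsOpenPartition S P Q ∧ x ∈ P ∧ Q.Nonempty := by
  obtain ⟨P, Q, hPQ, hP, hQ⟩ := exists_isOpenPartition hS h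
  rcases hPQ.mem_or_mem hx with hx | hx
  · exact ⟨P, Q, hPQ, hx, hQ⟩
  · exact ⟨Q, P, hPQ.symm, hx, hP⟩

end OpenPartition

section NonCutPoint

variable {X : Type*} [TopologicalSpace X] [CompactSpace X]

theorem exists_notMem_sUnion_of_isChain [Nonempty X] {C : Set (Set X)}
    (hC : IsChain (· ⊆ ·) C) (hopen : ∀ s ∈ C, IsOpen s) (huniv : Set.univ ∉ C) :
    ∃ q, q ∉ ⋃₀ C := by
  rcases C.eq_empty_or_nonempty with rfl | hne
  · simp
  by_contra! hcover
  have := hne.to_subtype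
  obtain ⟨⟨s, hs⟩, hsuniv⟩ := isCompact_univ.elim_directed_cover ((↑) : C → Set X)
    (fun s ↦ hopen s s.2) (fun q _ ↦ Set.sUnion_eq_iUnion ▸ hcover q) hC.directedOn.directed_val
  exact huniv (Set.univ_subset_iff.1 hsuniv ▸ hs)

-- Split each `{x}ᶜ` so that `c` is not in `U x`. For `q ∈ U x` the set `V q` is strictly larger
-- than `V x`, while Zorn's lemma yields a maximal set `V x`.
theorem exists_isPreconnected_compl_singleton [T1Space X] [ConnectedSpace X] :
    ∃ x : X, IsPreconnected ({x}ᶜ : Set X) := by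
  by_contra! hcut
  obtain ⟨c⟩ : Nonempty X := inferInstance
  have hsep (x : X) : ∃ U V, IsOpenPartition {x}ᶜ U V ∧ U.Nonempty ∧ c ∉ U := by
    obtain ⟨U, V, h, hU, hV⟩ := exists_isOpenPartition isOpen_compl_singleton (hcut x)
    by_cases hc : c ∈ U
    · exact ⟨V, U, h.symm, hV, h.notMem_right hc⟩
    · exact ⟨U, V, h, hU, hc⟩
  choose U V hUV hU hcU using hsep
  have hnest {x q : X} (hq : q ∈ U x) : insert x (V x) ⊆ V q :=
    (hUV x).symm.insert_left_subset (hUV q).symm hq (hcU x) (hcU q)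
  obtain ⟨-, ⟨x, rfl⟩, hmax⟩ := zorn_subset (Set.range V) fun C hC hchain ↦ by
    obtain ⟨q, hq⟩ := exists_notMem_sUnion_of_isChain hchain
      (fun s hs ↦ by obtain ⟨x, rfl⟩ := hC hs; exact (hUV x).isOpen_right)
      (fun huniv ↦ by
        obtain ⟨x, hx⟩ := hC huniv
        exact (hUV x).subset_right (hx ▸ Set.mem_univ x) rfl)
    refine ⟨V q, ⟨q, rfl⟩, fun s hs ↦ ?_⟩
    obtain ⟨x, rfl⟩ := hC hs
    have hqV : q ∉ V x := fun h ↦ hq ⟨V x, hs, h⟩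
    obtain rfl | hqx := eq_or_ne q x
    · rfl
    · exact (Set.subset_insert _ _).trans
        (hnest (((hUV x).mem_or_mem hqx).resolve_right hqV))
  obtain ⟨q, hq⟩ := hU x
  have hx : x ∈ V q := hnest hq (Set.mem_insert _ _)
  exact (hUV x).subset_right (hmax ⟨q, rfl⟩ ((Set.subset_insert _ _).trans (hnest hq)) hx) rfl

end NonCutPoint

section SeparableContinuum

theorem exists_countable_dense_denselyOrdered (A : Type*) [LinearOrder A] [DenselyOrdered A]
    [TopologicalSpace A] [OrderTopology A] [SeparableSpace A] [Nontrivial A] :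
    ∃ s : Set A, s.Countable ∧ Dense s ∧ DenselyOrdered s ∧ NoMinOrder s ∧ NoMaxOrder s := by
  obtain ⟨s, hs_count, hs, hbot, htop⟩ := exists_countable_dense_no_bot_top A
  refine ⟨s, hs_count, hs, ⟨fun a b hab ↦ ?_⟩, ⟨fun a ↦ ?_⟩, ⟨fun a ↦ ?_⟩⟩
  · obtain ⟨c, hc, hac, hcb⟩ := hs.exists_between hab
    exact ⟨⟨c, hc⟩, hac, hcb⟩
  · obtain ⟨b, hb⟩ := show ∃ b, b < (a : A) by simpa [IsBot] using fun h ↦ hbot a h a.2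
    obtain ⟨c, hc, -, hca⟩ := hs.exists_between hb
    exact ⟨⟨c, hc⟩, hca⟩
  · obtain ⟨b, hb⟩ := show ∃ b, (a : A) < b by simpa [IsTop] using fun h ↦ htop a h a.2
    obtain ⟨c, hc, hac, -⟩ := hs.exists_between hb
    exact ⟨⟨c, hc⟩, hac⟩

theorem exists_dense_orderIso_dense (A B : Type*)
    [LinearOrder A] [DenselyOrdered A] [TopologicalSpace A] [OrderTopology A] [SeparableSpace A]
    [Nontrivial A] [LinearOrder B] [DenselyOrdered B] [TopologicalSpace B] [OrderTopology B]
    [SeparableSpace B] [Nontrivial B] :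
    ∃ (s : Set A) (t : Set B), Dense s ∧ Dense t ∧ Nonempty (s ≃o t) := by
  obtain ⟨s, hs_count, hs, _, _, _⟩ := exists_countable_dense_denselyOrdered A
  obtain ⟨t, ht_count, ht, _, _, _⟩ := exists_countable_dense_denselyOrdered B
  have := hs_count.to_subtype
  have := ht_count.to_subtype
  have := hs.nonempty.to_subtype
  have := ht.nonempty.to_subtype
  exact ⟨s, t, hs, ht, Order.iso_of_countable_dense s t⟩

theorem exists_strictMono_denseRange {A B : Type*} [LinearOrder A] [DenselyOrdered A]
    [TopologicalSpace A] [OrderTopology A] [CompleteLinearOrder B] [TopologicalSpace B]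
    {s : Set A} {t : Set B} (hs : Dense s) (ht : Dense t) (φ : s ≃o t) :
    ∃ f : A → B, StrictMono f ∧ DenseRange f := by
  let f : A → B := fun a ↦ ⨆ d : {d : s // (d : A) ≤ a}, (φ d : B)
  have hle {a : A} {d : s} (hd : (d : A) ≤ a) : (φ d : B) ≤ f a :=
    le_iSup (fun d : {d : s // (d : A) ≤ a} ↦ (φ d : B)) ⟨d, hd⟩
  have hge {a : A} {d : s} (hd : a ≤ d) : f a ≤ φ d :=
    iSup_le fun e ↦ φ.monotone (e.2.trans hd)
  refine ⟨f, fun a b hab ↦ ?_, ht.mono fun y hy ↦ ?_⟩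
  · obtain ⟨d, hd, had, hdb⟩ := hs.exists_between hab
    obtain ⟨e, he, hde, heb⟩ := hs.exists_between hdb
    calc f a ≤ φ ⟨d, hd⟩ := hge had.le
      _ < φ ⟨e, he⟩ := φ.strictMono hde
      _ ≤ f b := hle heb.le
  · obtain ⟨d, hd⟩ := φ.surjective ⟨y, hy⟩
    exact ⟨d, ((hge le_rfl).antisymm (hle le_rfl)).trans (congrArg Subtype.val hd)⟩

theorem nonempty_orderIso_of_separableSpace (A B : Type*)
    [LinearOrder A] [TopologicalSpace A] [OrderTopology A] [CompactSpace A] [PreconnectedSpace A]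
    [SeparableSpace A] [Nontrivial A]
    [CompleteLinearOrder B] [TopologicalSpace B] [OrderTopology B] [PreconnectedSpace B]
    [SeparableSpace B] [Nontrivial B] :
    Nonempty (A ≃o B) := by
  have : DenselyOrdered A := denselyOrdered_of_preconnectedSpace
  have : DenselyOrdered B := denselyOrdered_of_preconnectedSpace
  obtain ⟨s, t, hs, ht, ⟨φ⟩⟩ := exists_dense_orderIso_dense A B
  obtain ⟨f, hmono, hdense⟩ := exists_strictMono_denseRange hs ht φ
  have hclosed := (isCompact_range (hmono.monotone.continuous_of_denseRange hdense)).isClosed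
  have hsurj : Function.Surjective f := Set.range_eq_univ.1 (hclosed.closure_eq ▸ hdense.closure_eq)
  exact ⟨hmono.orderIsoOfSurjective f hsurj⟩

end SeparableContinuum

section CutPointOrder

theorem eq_of_le_of_compactSpace_of_t2Space {A : Type*} {t t' : TopologicalSpace A} (hle : t ≤ t')
    (ht : @CompactSpace A t) (ht' : @T2Space A t') : t = t' :=
  hle.antisymm (continuous_id_iff_le.1 (@Continuous.continuous_symm_of_equiv_compact_to_t2
    A A t t' ht ht' (Equiv.refl A) (continuous_id_iff_le.2 hle)))

variable {A : Type*} [TopologicalSpace A] [CompactSpace A]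

theorem orderTopology_of_compactSpace [LinearOrder A] [ClosedIicTopology A] [ClosedIciTopology A] :
    OrderTopology A where
  topology_eq_generate_intervals := by
    refine eq_of_le_of_compactSpace_of_t2Space (le_generateFrom ?_) ‹_› ?_
    · rintro _ ⟨a, rfl | rfl⟩
      exacts [isOpen_Ioi, isOpen_Iio]
    · let _ : TopologicalSpace A := Preorder.topology A
      have : OrderTopology A := ⟨rfl⟩
      infer_instance

theorem exists_linearOrder_orderTopology [PreconnectedSpace A] {L R : A → Set A} {x y : A}
    (hLR : ∀ d, IsOpenPartition {d}ᶜ (L d) (R d)) (hx : ∀ d, x ∉ R d) (hy : ∀ d, y ∉ L d) :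
    ∃ _ : LinearOrder A, OrderTopology A ∧ IsBot x ∧ IsTop y := by
  classical
  have hmem {d e : A} : e ∈ L d ↔ d ∈ R e :=
    ⟨fun he ↦ (hLR d).symm.insert_left_subset (hLR e).symm he (hy d) (hy e) (Set.mem_insert _ _),
      fun hd ↦ (hLR e).insert_left_subset (hLR d) hd (hx e) (hx d) (Set.mem_insert _ _)⟩
  have hself (d : A) : d ∉ L d := fun h ↦ (hLR d).subset_left h rfl
  let lt : A → A → Prop := fun a b ↦ a ∈ L b
  have hlt : IsStrictTotalOrder A lt :=
    { irrefl := hself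
      trans := fun a b c hab hbc ↦
        (hLR b).insert_left_subset (hLR c) (hmem.1 hbc) (hx b) (hx c) (Or.inr hab)
      trichotomous := fun a b hab hba ↦ by
        by_contra hne
        exact ((hLR b).mem_or_mem hne).elim hab fun h ↦ hba (hmem.2 h) }
  let _ : LinearOrder A := linearOrderOfSTO lt
  have hIio (d : A) : Set.Iio d = L d := rfl
  have hIoi (d : A) : Set.Ioi d = R d := Set.ext fun a ↦ hmem
  have : ClosedIicTopology A := ⟨fun d ↦ by
    rw [← Set.compl_Ioi, hIoi]
    exact (hLR d).isOpen_right.isClosed_compl⟩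
  have : ClosedIciTopology A := ⟨fun d ↦ by
    rw [← Set.compl_Iio, hIio]
    exact (hLR d).isOpen_left.isClosed_compl⟩
  exact ⟨_, orderTopology_of_compactSpace, fun d ↦ not_lt.1 fun h ↦ hx d (hmem.1 h),
    fun d ↦ not_lt.1 (hy d)⟩

end CutPointOrder

section Arc

theorem exists_homeomorph_unitInterval {A : Type*} [TopologicalSpace A] [CompactSpace A]
    [PreconnectedSpace A] [SeparableSpace A] [Nontrivial A] {x y : A}
    (hcut : ∀ d, ∃ L R, IsOpenPartition {d}ᶜ L R ∧ x ∉ R ∧ y ∉ L) :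
    ∃ e : I ≃ₜ A, e 0 = x ∧ e 1 = y := by
  choose L R hLR hx hy using hcut
  obtain ⟨_, _, hbot, htop⟩ := exists_linearOrder_orderTopology hLR hx hy
  obtain ⟨e⟩ := nonempty_orderIso_of_separableSpace A I
  refine ⟨e.symm.toHomeomorph, ?_, ?_⟩
  · exact ((e.symm_apply_le).2 bot_le).antisymm (hbot _)
  · exact (htop _).antisymm ((e.le_symm_apply).2 le_top)

variable {X : Type*} [TopologicalSpace X] {x y : X} {P Q : Set X}

namespace IsOpenPartition

theorem isClosed_insert_insert_left (h : IsOpenPartition {x, y}ᶜ P Q) :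
    IsClosed (insert x (insert y P)) := by
  have hcompl : insert x (insert y P) = Qᶜ := by
    have hdisj := Set.disjoint_left.1 h.disjoint
    have hunion (p : X) : p ∈ P ∨ p ∈ Q ↔ ¬ (p = x ∨ p = y) := Set.ext_iff.1 h.union_eq p
    ext
    grind
  exact hcompl ▸ h.isOpen_right.isClosed_compl

theorem exists_isOpenPartition_crossing [T1Space X] (hX : ∀ x : X, IsPreconnected ({x}ᶜ : Set X))
    (hX₂ : ∀ z w : X, z ≠ w → ¬ IsPreconnected ({z, w}ᶜ : Set X))
    (h : IsOpenPartition {x, y}ᶜ P Q) {z d : X} (hd : d ∈ P) (hz : z ∈ Q) :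
    ∃ L R, IsOpenPartition {z, d}ᶜ L R ∧ x ∈ L ∧ y ∈ R := by
  have hzd : z ≠ d := fun hzd ↦ h.notMem_right hd (hzd ▸ hz)
  have hdS := h.subset_left hd
  have hzS := h.subset_right hz
  obtain ⟨L, R, hLR, hx, hR⟩ := exists_isOpenPartition_mem_left
    (Set.toFinite {z, d}).isClosed.isOpen_compl (hX₂ z d hzd) (x := x) (by grind)
  exact ⟨L, R, hLR, hx, h.mem_right_of_crossing hX hLR hR hd hz hx⟩

theorem exists_isOpenPartition_subtype [T1Space X] (hX : ∀ x : X, IsPreconnected ({x}ᶜ : Set X))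
    (hX₂ : ∀ z w : X, z ≠ w → ¬ IsPreconnected ({z, w}ᶜ : Set X))
    (h : IsOpenPartition {x, y}ᶜ P Q) (hQ : Q.Nonempty) (d : ↥(insert x (insert y P))) :
    ∃ L R : Set ↥(insert x (insert y P)),
      IsOpenPartition {d}ᶜ L R ∧ ⟨x, Or.inl rfl⟩ ∉ R ∧ ⟨y, Or.inr (Or.inl rfl)⟩ ∉ L := by
  obtain ⟨d, rfl | rfl | hd⟩ := d
  · exact ⟨∅, _, ⟨isOpen_empty, isOpen_compl_singleton, Set.empty_disjoint _, Set.empty_union _⟩,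
      not_not.2 rfl, Set.notMem_empty _⟩
  · exact ⟨_, ∅, ⟨isOpen_compl_singleton, isOpen_empty, Set.disjoint_empty _, Set.union_empty _⟩,
      Set.notMem_empty _, not_not.2 rfl⟩
  · obtain ⟨z, hz⟩ := hQ
    obtain ⟨L, R, hLR, hx, hy⟩ := h.exists_isOpenPartition_crossing hX hX₂ hd hz
    refine ⟨Subtype.val ⁻¹' L, Subtype.val ⁻¹' R, ?_, hLR.notMem_right hx, hLR.notMem_left hy⟩
    convert hLR.preimage continuous_subtype_val using 1
    have hzP := h.notMem_left hz
    have hzS := h.subset_right hz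
    ext ⟨p, hp⟩
    grind

theorem exists_path [T1Space X] [CompactSpace X] [SecondCountableTopology X]
    (hX : ∀ x : X, IsPreconnected ({x}ᶜ : Set X))
    (hX₂ : ∀ z w : X, z ≠ w → ¬ IsPreconnected ({z, w}ᶜ : Set X))
    (h : IsOpenPartition {x, y}ᶜ P Q) (hxy : x ≠ y) (hP : P.Nonempty) (hQ : Q.Nonempty) :
    ∃ γ : Path x y, Function.Injective γ ∧ Set.range γ = insert x (insert y P) := by
  have : CompactSpace ↥(insert x (insert y P)) :=
    isCompact_iff_compactSpace.1 h.isClosed_insert_insert_left.isCompact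
  have : PreconnectedSpace ↥(insert x (insert y P)) :=
    isPreconnected_iff_preconnectedSpace.1
      (h.isPreconnected_insert_insert_left hxy (hX x) (hX y) hP)
  have : Nontrivial ↥(insert x (insert y P)) :=
    ⟨⟨x, Or.inl rfl⟩, ⟨y, Or.inr (Or.inl rfl)⟩, fun hxy' ↦ hxy (congrArg Subtype.val hxy')⟩
  obtain ⟨e, he₀, he₁⟩ :=
    exists_homeomorph_unitInterval (h.exists_isOpenPartition_subtype hX hX₂ hQ)
  refine ⟨⟨⟨fun t ↦ e t, by fun_prop⟩, congrArg Subtype.val he₀, congrArg Subtype.val he₁⟩,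
    Subtype.val_injective.comp e.injective, ?_⟩
  exact (e.surjective.range_comp Subtype.val).trans Subtype.range_val

end IsOpenPartition

end Arc

section SimpleClosedCurve

/-- `X` is a simple closed curve formed by the arcs `γ` and `δ`, which have only their endpoints
in common. -/
structure IsArcDecomposition {X : Type*} [TopologicalSpace X] {x y : X} (γ δ : Path x y) :
    Prop where
  injective_left : Function.Injective γ
  injective_right : Function.Injective δ
  range_union_range : Set.range γ ∪ Set.range δ = Set.univ
  range_inter_range : Set.range γ ∩ Set.range δ ⊆ {x, y}

namespace IsArcDecomposition

variable {X Y : Type*} [TopologicalSpace X] [TopologicalSpace Y] {x y : X} {x' y' : Y}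
  {γ δ : Path x y} {γ' δ' : Path x' y'}

theorem eq_of_left_eq_right (h : IsArcDecomposition γ δ) (γ' δ' : Path x' y') {s t : I}
    (hst : γ s = δ t) : γ' s = δ' t := by
  rcases h.range_inter_range ⟨⟨s, rfl⟩, t, hst.symm⟩ with hs | hs
  · obtain rfl : s = 0 := h.injective_left (hs.trans γ.source.symm)
    obtain rfl : t = 0 := h.injective_right (hst.symm.trans (hs.trans δ.source.symm))
    rw [γ'.source, δ'.source]
  · obtain rfl : s = 1 := h.injective_left (hs.trans γ.target.symm)
    obtain rfl : t = 1 := h.injective_right (hst.symm.trans (hs.trans δ.target.symm))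
    rw [γ'.target, δ'.target]

theorem sumElim_eq_of_sumElim_eq (h : IsArcDecomposition γ δ) (γ' δ' : Path x' y') {a b : I ⊕ I}
    (hab : Sum.elim γ δ a = Sum.elim γ δ b) : Sum.elim γ' δ' a = Sum.elim γ' δ' b := by
  rcases a with s | s <;> rcases b with t | t
  · exact congrArg γ' (h.injective_left hab)
  · exact h.eq_of_left_eq_right γ' δ' hab
  · exact (h.eq_of_left_eq_right γ' δ' hab.symm).symm
  · exact congrArg δ' (h.injective_right hab)

theorem isQuotientMap_sumElim [T2Space X] (h : IsArcDecomposition γ δ) :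
    IsQuotientMap (Sum.elim γ δ) := by
  have hcont : Continuous (Sum.elim γ δ) := γ.continuous.sumElim δ.continuous
  refine hcont.isClosedMap.isQuotientMap hcont (Set.range_eq_univ.1 ?_)
  rw [Set.Sum.elim_range, h.range_union_range]

theorem nonempty_homeomorph [T2Space X] [T2Space Y] (h : IsArcDecomposition γ δ)
    (h' : IsArcDecomposition γ' δ') : Nonempty (X ≃ₜ Y) := by
  have hker : Setoid.ker (Sum.elim γ δ) = Setoid.ker (Sum.elim γ' δ') :=
    Setoid.ext fun _ _ ↦ ⟨h.sumElim_eq_of_sumElim_eq γ' δ', h'.sumElim_eq_of_sumElim_eq γ δ⟩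
  let f : C(I ⊕ I, X) := ⟨Sum.elim γ δ, γ.continuous.sumElim δ.continuous⟩
  let g : C(I ⊕ I, Y) := ⟨Sum.elim γ' δ', γ'.continuous.sumElim δ'.continuous⟩
  have hf : IsQuotientMap f := h.isQuotientMap_sumElim
  have hg : IsQuotientMap g := h'.isQuotientMap_sumElim
  exact ⟨hf.homeomorph.symm.trans (hker ▸ hg.homeomorph)⟩

end IsArcDecomposition

theorem mem_sphere_fin_two {v : EuclideanSpace ℝ (Fin 2)} :
    v ∈ Metric.sphere (0 : EuclideanSpace ℝ (Fin 2)) 1 ↔ v 0 ^ 2 + v 1 ^ 2 = 1 := by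
  rw [EuclideanSpace.sphere_zero_eq 1 zero_le_one]
  simp

/-- The half of `S¹` from `(-1, 0)` to `(1, 0)` lying in `ε * y ≥ 0`, for `ε = ±1`,
parametrized affinely in the abscissa. -/
noncomputable def semicircle (ε : ℝ) (hε : ε ^ 2 = 1) :
    Path (X := Circle1) ⟨!₂[-1, 0], mem_sphere_fin_two.2 (by simp)⟩
      ⟨!₂[1, 0], mem_sphere_fin_two.2 (by simp)⟩ where
  toFun t := ⟨!₂[2 * (t : ℝ) - 1, ε * (2 * √(t * (1 - t)))], by
    have hsqrt := Real.sq_sqrt (mul_nonneg t.2.1 (sub_nonneg.2 t.2.2))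
    simp only [mem_sphere_fin_two, Matrix.cons_val_zero, Matrix.cons_val_one, mul_pow, hε, hsqrt]
    ring⟩
  continuous_toFun := by fun_prop
  source' := by simp
  target' := by norm_num

theorem semicircle_injective {ε : ℝ} (hε : ε ^ 2 = 1) : Function.Injective (semicircle ε hε) := by
  intro s t hst
  have hcoord : 2 * (s : ℝ) - 1 = 2 * t - 1 := congrArg (fun w : Circle1 ↦ w.1 0) hst
  exact Subtype.ext (by linarith)

theorem range_semicircle {ε : ℝ} (hε : ε ^ 2 = 1) :
    Set.range (semicircle ε hε) = {w | 0 ≤ ε * w.1 1} := by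
  ext w
  constructor
  · rintro ⟨t, rfl⟩
    have hmul : ε * (ε * (2 * √(t * (1 - t)))) = 2 * √(t * (1 - t)) := by
      rw [← mul_assoc, ← sq, hε, one_mul]
    change 0 ≤ ε * (ε * (2 * √(t * (1 - t))))
    rw [hmul]
    positivity
  · intro (hw : 0 ≤ ε * w.1 1)
    have hnorm := mem_sphere_fin_two.1 w.2
    have hsq : (1 + w.1 0) / 2 * (1 - (1 + w.1 0) / 2) = (ε * w.1 1 / 2) ^ 2 := by
      linear_combination (-1 / 4) * hnorm - (1 / 4) * w.1 1 ^ 2 * hε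
    obtain ⟨hlower, hupper⟩ := abs_le.1 ((sq_le_one_iff_abs_le_one _).1
      (hnorm ▸ le_add_of_nonneg_right (sq_nonneg (w.1 1))))
    refine ⟨⟨(1 + w.1 0) / 2, by linarith, by linarith⟩,
      Subtype.ext (PiLp.ext (Fin.forall_fin_two.2 ⟨?_, ?_⟩))⟩
    · change 2 * ((1 + w.1 0) / 2) - 1 = w.1 0
      ring
    · change ε * (2 * √((1 + w.1 0) / 2 * (1 - (1 + w.1 0) / 2))) = w.1 1
      rw [hsq, Real.sqrt_sq (by positivity)]
      linear_combination w.1 1 * hε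

theorem isArcDecomposition_semicircle :
    IsArcDecomposition (semicircle 1 (by norm_num)) (semicircle (-1) (by norm_num)) where
  injective_left := semicircle_injective _
  injective_right := semicircle_injective _
  range_union_range := by
    ext w
    rw [range_semicircle, range_semicircle]
    simp [le_total]
  range_inter_range := by
    rw [range_semicircle, range_semicircle]
    rintro w ⟨hupper, hlower⟩
    have hw₁ : w.1 1 = 0 := by linarith [hupper.out, hlower.out]
    have hw₀ : w.1 0 ^ 2 = 1 := by simpa [hw₁] using mem_sphere_fin_two.1 w.2
    have heq (a : ℝ) (ha : w.1 0 = a) : w.1 = !₂[a, 0] :=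
      PiLp.ext (Fin.forall_fin_two.2 ⟨ha, hw₁⟩)
    rcases sq_eq_one_iff.1 hw₀ with hw₀ | hw₀
    · exact Or.inr (Subtype.ext (heq 1 hw₀))
    · exact Or.inl (Subtype.ext (heq (-1) hw₀))

end SimpleClosedCurve

section Circle

variable {X : Type*} [TopologicalSpace X]

theorem exists_isArcDecomposition [T1Space X] [CompactSpace X] [SecondCountableTopology X]
    [Nontrivial X] (hX : ∀ x : X, IsPreconnected ({x}ᶜ : Set X))
    (hX₂ : ∀ z w : X, z ≠ w → ¬ IsPreconnected ({z, w}ᶜ : Set X)) :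
    ∃ (x y : X) (γ δ : Path x y), IsArcDecomposition γ δ := by
  obtain ⟨x, y, hxy⟩ := exists_pair_ne X
  obtain ⟨P, Q, h, hP, hQ⟩ :=
    exists_isOpenPartition (Set.toFinite {x, y}).isClosed.isOpen_compl (hX₂ x y hxy)
  obtain ⟨γ, hγ, hγ_range⟩ := h.exists_path hX hX₂ hxy hP hQ
  obtain ⟨δ, hδ, hδ_range⟩ := h.symm.exists_path hX hX₂ hxy hQ hP
  refine ⟨x, y, γ, δ, hγ, hδ, Set.eq_univ_of_forall fun p ↦ ?_, fun p hp ↦ ?_⟩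
  · have hp : p ∈ ({x, y}ᶜ : Set X) → p ∈ P ∨ p ∈ Q := h.mem_or_mem
    grind
  · have hp' : p ∈ P → p ∉ Q := h.notMem_right
    grind

theorem nonempty_homeomorph_circle1 [T2Space X] [CompactSpace X] [SecondCountableTopology X]
    [Nontrivial X] (hX : ∀ x : X, IsPreconnected ({x}ᶜ : Set X))
    (hX₂ : ∀ z w : X, z ≠ w → ¬ IsPreconnected ({z, w}ᶜ : Set X)) : Nonempty (X ≃ₜ Circle1) := by
  obtain ⟨x, y, γ, δ, h⟩ := exists_isArcDecomposition hX hX₂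
  exact h.nonempty_homeomorph isArcDecomposition_semicircle

theorem IsOpenPartition.inter_right_of_crossing [T1Space X] {a b x y : X} {P Q A B : Set X}
    (h : IsOpenPartition {a, x}ᶜ P Q) (h' : IsOpenPartition {b, y}ᶜ A B) (hb : b ∈ Q)
    (ha : a ∈ A) : IsOpenPartition {x, y}ᶜ (P ∩ B) ({x, y}ᶜ ∩ (Q ∪ A)) where
  isOpen_left := h.isOpen_left.inter h'.isOpen_right
  isOpen_right := (Set.toFinite {x, y}).isClosed.isOpen_compl.inter
    (h.isOpen_right.union h'.isOpen_left)
  disjoint := by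
    have hPQ := Set.disjoint_left.1 h.disjoint
    have hAB := Set.disjoint_left.1 h'.disjoint
    rw [Set.disjoint_left]
    grind
  union_eq := by
    have hPQ (p : X) : p ∈ P ∨ p ∈ Q ↔ ¬ (p = a ∨ p = x) := Set.ext_iff.1 h.union_eq p
    have hAB (p : X) : p ∈ A ∨ p ∈ B ↔ ¬ (p = b ∨ p = y) := Set.ext_iff.1 h'.union_eq p
    ext p
    grind

theorem not_isPreconnected_compl_pair [T1Space X] (hX : ∀ x : X, IsPreconnected ({x}ᶜ : Set X))
    (hU : ∀ U : Set X, IsOpen U → U.Nonempty →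
      ∃ z ∈ U, ∀ w ∉ U, ¬ IsPreconnected ({z, w}ᶜ : Set X))
    {x y : X} (hxy : x ≠ y) (hne : ({x, y}ᶜ : Set X).Nonempty) :
    ¬ IsPreconnected ({x, y}ᶜ : Set X) := by
  have hpair (p q : X) : IsOpen ({p, q}ᶜ : Set X) := (Set.toFinite {p, q}).isClosed.isOpen_compl
  obtain ⟨a, ha, hcut_a⟩ := hU _ (hpair x y) hne
  obtain ⟨P, Q, h, hy, hQ⟩ :=
    exists_isOpenPartition_mem_left (hpair a x) (hcut_a x (by simp)) (x := y) (by grind)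
  obtain ⟨b, hb, hcut_b⟩ := hU Q h.isOpen_right hQ
  have hbS := h.subset_right hb
  obtain ⟨A, B, h', ha', hB⟩ :=
    exists_isOpenPartition_mem_left (hpair b y) (hcut_b y (h.notMem_right hy)) (x := a) (by grind)
  have hxB : x ∈ B := h.mem_right_of_crossing hX h' hB hy hb ha'
  have hPx : IsPreconnected (insert x P) :=
    h.isPreconnected_insert_left_of_compl_pair (by grind) (hX a)
  have hPB : (P ∩ B).Nonempty := by
    obtain ⟨t, ht, htB, htx⟩ := hPx B {x}ᶜ h'.isOpen_right isOpen_compl_singleton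
      (fun p _ ↦ by grind) ⟨x, Or.inl rfl, hxB⟩ ⟨y, Or.inr hy, hxy.symm⟩
    exact ⟨t, ht.resolve_left htx, htB⟩
  exact (h.inter_right_of_crossing h' hb ha').not_isPreconnected hPB ⟨a, ha, Or.inr ha'⟩

end Circle

section CutPoint

variable {X : Type*} [TopologicalSpace X]

-- If `c` lies in `P`, then the connected set `Q ∪ {z, w}` joins `z` to `w` outside `{c}`.
theorem IsOpenPartition.isPreconnected_compl_pair [T1Space X] {c z w : X} {A B : Set X}
    (h : IsOpenPartition {c}ᶜ A B) (hzA : z ∈ A) (hwB : w ∈ B)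
    (hz : IsPreconnected ({z}ᶜ : Set X)) (hw : IsPreconnected ({w}ᶜ : Set X)) :
    IsPreconnected ({z, w}ᶜ : Set X) := by
  have hzw : z ≠ w := fun hzw ↦ h.notMem_right hzA (hzw ▸ hwB)
  have hzc := h.subset_left hzA
  have hwc := h.subset_right hwB
  by_contra hcut
  obtain ⟨P, Q, h', hc, hQ⟩ := exists_isOpenPartition_mem_left
    (Set.toFinite {z, w}).isClosed.isOpen_compl hcut (x := c) (by grind)
  have hsub : insert z (insert w Q) ⊆ {c}ᶜ := by
    have := h'.notMem_right hc
    grind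
  exact h.notMem_left hwB (h.subset_left_of_mem
    (h'.symm.isPreconnected_insert_insert_left hzw hz hw hQ) hsub (Or.inl rfl) hzA
    (Or.inr (Or.inl rfl)))

end CutPoint

section Dynamics

/-- The action of `G` on `M` is a strong boundary action in the sense of Laca and Spielberg:
every proper closed subset of `M` can be moved into every nonempty open subset. Closed subsets
are written as complements of open ones. -/
def IsStrongBoundaryAction (G M : Type*) [TopologicalSpace M] [SMul G M] : Prop :=
  ∀ U V : Set M, IsOpen U → U.Nonempty → IsOpen V → V.Nonempty → ∃ g : G, ∀ p ∉ U, g • p ∈ V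

theorem IsConvergenceAction.isStrongBoundaryAction {Γ M : Type} [Group Γ] [TopologicalSpace M]
    [MulAction Γ M] [CompactSpace M] [Infinite Γ] (hΓ : IsConvergenceAction Γ M)
    (hmin : ∀ x : M, Dense (MulAction.orbit Γ x)) : IsStrongBoundaryAction Γ M := by
  intro U V hU hU_ne hV hV_ne
  let γ := Infinite.natEmbedding Γ
  obtain ⟨φ, -, a, b, hφ⟩ := hΓ.2 γ γ.injective
  obtain ⟨-, ⟨h, rfl⟩, hha⟩ := (hmin a).exists_mem_open hV hV_ne
  obtain ⟨-, ⟨k, rfl⟩, hkb⟩ := (hmin b).exists_mem_open hU hU_ne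
  have hK : IsCompact ((k • ·) ⁻¹' Uᶜ) := (hU.isClosed_compl.preimage (hΓ.1 k)).isCompact
  obtain ⟨n, hn⟩ := (hφ _ hK (not_not.2 hkb) _ ((hV.preimage (hΓ.1 h)).mem_nhds hha)).exists
  refine ⟨h * γ (φ n) * k⁻¹, fun p hp ↦ ?_⟩
  simpa [mul_smul] using hn (k⁻¹ • p) (by simpa using hp)

theorem infinite_of_dense_orbit {G M : Type*} [TopologicalSpace M] [T1Space M] [SMul G M]
    [Infinite M] {x : M} (hx : Dense (MulAction.orbit G x)) : Infinite G := by
  by_contra hG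
  have := not_infinite_iff_finite.1 hG
  have horbit : (MulAction.orbit G x).Finite := Set.finite_range _
  exact Set.infinite_univ (hx.closure_eq ▸ horbit.isClosed.closure_eq.symm ▸ horbit)

theorem IsBoundaryPair.infinite {Γ M : Type} [Group Γ] [TopologicalSpace M] [MulAction Γ M]
    [Nonempty M] (h : IsBoundaryPair Γ M) : Infinite M := by
  have := h.metrizable
  obtain ⟨x⟩ : Nonempty M := inferInstance
  have := h.perfect x
  exact Set.infinite_univ_iff.1 (infinite_of_mem_nhds x univ_mem)

theorem IsBoundaryPair.isStrongBoundaryAction {Γ M : Type} [Group Γ] [TopologicalSpace M]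
    [MulAction Γ M] [Nonempty M] (h : IsBoundaryPair Γ M)
    (hmin : ∀ x : M, Dense (MulAction.orbit Γ x)) : IsStrongBoundaryAction Γ M := by
  have := h.compact
  have := h.metrizable
  have := h.infinite
  have : Infinite Γ := infinite_of_dense_orbit (hmin (Classical.arbitrary M))
  exact h.conv.isStrongBoundaryAction hmin

/-- The set `X(z)` of the points which do not form a cut pair with `z`. -/
def nonCutPartners {X : Type*} [TopologicalSpace X] (z : X) : Set X :=
  {w | w ≠ z ∧ IsConnected ({z, w}ᶜ : Set X)}

theorem isPreconnected_smul_set {G X : Type*} [TopologicalSpace X] [SMul G X]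
    [ContinuousConstSMul G X] (g : G) {S : Set X} (hS : IsPreconnected S) :
    IsPreconnected (g • S) :=
  hS.image (g • ·) (continuous_const_smul g).continuousOn

theorem nonempty_compl_pair {X : Type*} [TopologicalSpace X] [T1Space X] [Nonempty X]
    [∀ x : X, NeBot (𝓝[≠] x)] (x y : X) : ({x, y}ᶜ : Set X).Nonempty := by
  rw [Set.compl_eq_univ_sdiff]
  exact (dense_univ.sdiff_finite (Set.toFinite {x, y})).nonempty

theorem IsStrongBoundaryAction.exists_smul_mem {G M : Type*} [TopologicalSpace M] [T1Space M]
    [Nontrivial M] [SMul G M] (hG : IsStrongBoundaryAction G M) (x : M) {U : Set M}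
    (hU : IsOpen U) (hU_ne : U.Nonempty) : ∃ g : G, g • x ∈ U := by
  obtain ⟨g, hg⟩ := hG {x}ᶜ U isOpen_compl_singleton (exists_ne x) hU hU_ne
  exact ⟨g, hg x (not_not.2 rfl)⟩

namespace IsStrongBoundaryAction

variable {G M : Type*} [Group G] [TopologicalSpace M] [T1Space M] [Nontrivial M]
  [∀ x : M, NeBot (𝓝[≠] x)] [MulAction G M] [ContinuousConstSMul G M]

theorem dense_nonCutPartners_of_cutPoint (hG : IsStrongBoundaryAction G M) {c z : M}
    (hc : ¬ IsPreconnected ({c}ᶜ : Set M)) (hz : IsPreconnected ({z}ᶜ : Set M)) :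
    Dense (nonCutPartners z) := by
  obtain ⟨A, B, h, hA, hB⟩ := exists_isOpenPartition isOpen_compl_singleton hc
  refine dense_iff_inter_open.2 fun U hU hU_ne ↦ ?_
  obtain ⟨g, hg⟩ := hG A (U \ {z}) h.isOpen_left hA (hU.sdiff isClosed_singleton)
    ((dense_compl_singleton z).inter_open_nonempty U hU hU_ne)
  have hgB : g • B ⊆ U \ {z} := by
    rintro _ ⟨p, hp, rfl⟩
    exact hg p (h.notMem_left hp)
  have hgc : g • c ≠ z := (hg c fun hcA ↦ h.subset_left hcA rfl).2
  have hgAB : IsOpenPartition {g • c}ᶜ (g • A) (g • B) := by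
    simpa [Set.smul_set_compl] using h.smul g
  have hz_mem : z ∈ g • A := (hgAB.mem_or_mem hgc.symm).resolve_right fun hzB ↦ (hgB hzB).2 rfl
  obtain ⟨k, hk⟩ := hG.exists_smul_mem z hgAB.isOpen_right hB.smul_set
  have hkz : IsPreconnected ({k • z}ᶜ : Set M) := by
    simpa [Set.smul_set_compl] using isPreconnected_smul_set k hz
  exact ⟨k • z, (hgB hk).1, (hgB hk).2, nonempty_compl_pair _ _,
    hgAB.isPreconnected_compl_pair hz_mem hk hz hkz⟩

theorem exists_forall_notMem_not_isPreconnected (hG : IsStrongBoundaryAction G M) {z : M}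
    (hz : ¬ Dense (nonCutPartners z)) {V : Set M} (hV : IsOpen V) (hV_ne : V.Nonempty) :
    ∃ x ∈ V, ∀ w ∉ V, ¬ IsPreconnected ({x, w}ᶜ : Set M) := by
  simp only [dense_iff_inter_open, not_forall] at hz
  obtain ⟨U, hU, hU_ne, hUz⟩ := hz
  obtain ⟨g, hg⟩ := hG (U \ {z}) V (hU.sdiff isClosed_singleton)
    ((dense_compl_singleton z).inter_open_nonempty U hU hU_ne) hV hV_ne
  refine ⟨g • z, hg z fun hz ↦ hz.2 rfl, fun w hw hconn ↦ hUz ?_⟩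
  have hgw : g⁻¹ • w ∈ U \ {z} := by
    by_contra hgw
    exact hw (smul_inv_smul g w ▸ hg _ hgw)
  refine ⟨g⁻¹ • w, hgw.1, hgw.2, nonempty_compl_pair _ _, ?_⟩
  simpa [Set.smul_set_compl, Set.smul_set_insert] using isPreconnected_smul_set g⁻¹ hconn

end IsStrongBoundaryAction

end Dynamics

theorem dense_nonCutPartners {G M : Type*} [Group G] [TopologicalSpace M] [MulAction G M]
    [ContinuousConstSMul G M] [CompactSpace M] [T2Space M] [SecondCountableTopology M]
    [ConnectedSpace M] [Nontrivial M] (hG : IsStrongBoundaryAction G M)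
    (hM : IsEmpty (M ≃ₜ Circle1)) {z : M} (hz : IsPreconnected ({z}ᶜ : Set M)) :
    Dense (nonCutPartners z) := by
  by_cases hcut : ∀ x : M, IsPreconnected ({x}ᶜ : Set M)
  · by_contra hdense
    obtain ⟨e⟩ := nonempty_homeomorph_circle1 hcut fun x y hxy ↦
      not_isPreconnected_compl_pair hcut
        (fun V hV hV_ne ↦ hG.exists_forall_notMem_not_isPreconnected hdense hV hV_ne) hxy
        (nonempty_compl_pair x y)
    exact hM.false e
  · obtain ⟨c, hc⟩ := not_forall.1 hcut
    exact hG.dense_nonCutPartners_of_cutPoint hc hz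

theorem dense_non_cut_pairs_general {G M : Type*} [Group G] [TopologicalSpace M] [MulAction G M]
    [ContinuousConstSMul G M] [CompactSpace M] [T2Space M] [SecondCountableTopology M]
    [ConnectedSpace M] [Nontrivial M] (hG : IsStrongBoundaryAction G M)
    (hM : IsEmpty (M ≃ₜ Circle1)) :
    ∃ z : M, Dense {w : M | w ≠ z ∧ IsConnected ({z, w}ᶜ : Set M)} := by
  obtain ⟨z, hz⟩ := exists_isPreconnected_compl_singleton (X := M)
  exact ⟨z, dense_nonCutPartners hG hM hz⟩

/-- **Lemma (dense non-cut pairs).**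
If `(Δ, M)` is a uniform boundary pair with `M` connected and not homeomorphic to the circle,
and the action of `Δ` on `M` is minimal, then there is a point `z ∈ M` such that the set of
`w ≠ z` with `M ∖ {z, w}` connected is dense in `M`. -/
theorem dense_non_cut_pairs
    {Δ M : Type} [Group Δ] [TopologicalSpace M] [MulAction Δ M]
    (hBP : IsBoundaryPair Δ M)
    (huniform : ∀ x : M, IsConicalLimitPoint Δ x)
    (hconn : ConnectedSpace M) (hnotcircle : IsEmpty (M ≃ₜ Circle1))
    (hminimal : ∀ x : M, Dense (MulAction.orbit Δ x)) :
    ∃ z : M, Dense {w : M | w ≠ z ∧ IsConnected ({z, w}ᶜ : Set M)} := by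
  have := hBP.compact
  have := hBP.metrizable
  have := hBP.infinite
  have : ContinuousConstSMul Δ M := ⟨hBP.conv.1⟩
  exact dense_non_cut_pairs_general (hBP.isStrongBoundaryAction hminimal) hnotcircle
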